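/- arXiv:2207.13672 — 2 statements merged into one kernel-verified Lean document; each statement's English description precedes it below -/
import Mathlib

section
/- Suppose X is a metric space with base point x₀ (write ‖x‖ = d(x,x₀)), g and h are integral quasi-geodesic rays in X, and κ : [0,∞) → [1,∞) is a sublinear, concave, and increasing function. Then the following two conditions are equivalent: (1) there is a constant C ≥ 1 such that d(g(t),h(t)) ≤ C·κ(‖g(t)‖) for all sufficiently large t; (2) there is a constant M > 0 such that d(g(t),h(t)) ≤ M·κ(t) for all sufficiently large t. -/
open Filter Metric

/-- `g` is an integral `(q,Q)`-quasi-geodesic on the index set `s ⊆ ℕ`: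
`|x − y|/q − Q ≤ d(g x, g y) ≤ q·|x − y| + Q` for all `x, y ∈ s`. -/
def IsQGOn {X : Type*} [MetricSpace X] (q Q : ℝ) (g : ℕ → X) (s : Set ℕ) : Prop :=
  ∀ x ∈ s, ∀ y ∈ s,
    |(x : ℝ) - (y : ℝ)| / q - Q ≤ dist (g x) (g y) ∧
    dist (g x) (g y) ≤ q * |(x : ℝ) - (y : ℝ)| + Q

/-- An integral `(q,Q)`-quasi-geodesic ray: domain all positive integers. -/
def IsQGRay {X : Type*} [MetricSpace X] (q Q : ℝ) (g : ℕ → X) : Prop :=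
  IsQGOn q Q g {i | 1 ≤ i}

/-- The `m`-cone `C_X(x₀,q,Q,g,m)`: all `x ∈ X` reachable as `h i`, `i ≥ m`, by an
integral `(q,Q)`-quasi-geodesic `h` starting at `x₀` and agreeing with `g` for indices `≤ m`. -/
def Cone {X : Type*} [MetricSpace X] (x₀ : X) (q Q : ℝ) (g : ℕ → X) (m : ℕ) : Set X :=
  {x | ∃ (h : ℕ → X) (n i : ℕ), IsQGOn q Q h (Set.Icc 1 n) ∧ h 1 = x₀ ∧
      (∀ j, 1 ≤ j → j ≤ m → h j = g j) ∧ m ≤ i ∧ i ≤ n ∧ h i = x}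

/-- `f` is slowly-oscillating: whenever `d(x₀,xₙ) → ∞` and `d(xₙ,yₙ) < M` for all `n ≥ 1`,
then `d(f xₙ, f yₙ) → 0`. -/
def SlowlyOscillating {X E : Type*} [MetricSpace X] [PseudoMetricSpace E] (f : X → E) : Prop :=
  ∀ (x₀ : X) (x y : ℕ → X),
    Tendsto (fun n => dist x₀ (x n)) atTop atTop →
    (∃ M > (0 : ℝ), ∀ n, 1 ≤ n → dist (x n) (y n) < M) →
    Tendsto (fun n => dist (f (x n)) (f (y n))) atTop (nhds 0)

/-- `f` is geometrically slowly-oscillating: bounded, continuous, slowly-oscillating, and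
for every `ε > 0`, `k ≥ 1`, `x₀` and integral `(k,k)`-quasi-geodesic ray `g` at `x₀`
there is `m ≥ 1` with `diam (f '' C_X(x₀,k,k,g,m)) < ε`. -/
def GeomSO {X E : Type*} [MetricSpace X] [PseudoMetricSpace E] (f : X → E) : Prop :=
  Bornology.IsBounded (Set.range f) ∧ Continuous f ∧ SlowlyOscillating f ∧
    ∀ ε > (0 : ℝ), ∀ k : ℝ, 1 ≤ k → ∀ (x₀ : X) (g : ℕ → X),
      IsQGRay k k g → g 1 = x₀ →
      ∃ m : ℕ, 1 ≤ m ∧ Metric.diam (f '' Cone x₀ k k g m) < ε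

/-- Every bounded subset of `X` can be covered by finitely many sets of diameter less than `M`. -/
def CoverM (X : Type*) [MetricSpace X] (M : ℝ) : Prop :=
  ∀ B : Set X, Bornology.IsBounded B →
    ∃ S : Finset (Set X), (∀ s ∈ S, Metric.diam s < M) ∧ B ⊆ ⋃ s ∈ S, (s : Set X)

/-- `X` is integrally `(q,Q)`-quasi-geodesic: every two points are joined by a finite
integral `(q,Q)`-quasi-geodesic. -/
def IntegrallyQGWith (X : Type*) [MetricSpace X] (q Q : ℝ) : Prop :=
  ∀ x y : X, ∃ (g : ℕ → X) (n : ℕ), 1 ≤ n ∧ IsQGOn q Q g (Set.Icc 1 n) ∧ g 1 = x ∧ g n = y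

/-- The Gromov product `⟨x,y⟩_a = (d(x,a) + d(y,a) − d(x,y))/2`. -/
noncomputable def gromovProd {X : Type*} [MetricSpace X] (a x y : X) : ℝ :=
  (dist x a + dist y a - dist x y) / 2

/-- `X` is a geodesic space: any two points are joined by a geodesic segment. -/
def IsGeodesicSpace (X : Type*) [MetricSpace X] : Prop :=
  ∀ x y : X, ∃ γ : ℝ → X, γ 0 = x ∧ γ (dist x y) = y ∧
    ∀ s ∈ Set.Icc (0 : ℝ) (dist x y), ∀ t ∈ Set.Icc (0 : ℝ) (dist x y),
      dist (γ s) (γ t) = |s - t|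

/-!
A nonnegative concave function `κ` on `[0, ∞)` is monotone and satisfies `κ (a * x) ≤ a * κ x` for
`a ≥ 1`, so the order of growth of `κ ∘ u` depends only on that of `u`. Along a quasi-geodesic ray
`‖g t‖` grows like `t`, hence `κ ‖g t‖` and `κ t` have the same order of growth.
-/

section ConcaveGrowth

open Asymptotics

theorem monotoneOn_Ici_of_concaveOn_of_bddBelow {𝕜 : Type*} [Field 𝕜] [LinearOrder 𝕜]
    [IsStrictOrderedRing 𝕜] {a : 𝕜} {f : 𝕜 → 𝕜} (hf : ConcaveOn 𝕜 (Set.Ici a) f)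
    (hbdd : BddBelow (f '' Set.Ici a)) : MonotoneOn f (Set.Ici a) := by
  intro x hx y hy hxy
  by_contra! hlt
  obtain ⟨b, hb⟩ := hbdd
  have hxy : x < y := hxy.lt_of_ne fun h => hlt.ne (h ▸ rfl)
  set m := (f y - f x) / (y - x)
  have hm_neg : m < 0 := div_neg_of_neg_of_pos (sub_neg.2 hlt) (sub_pos.2 hxy)
  have hby : b ≤ f y := hb ⟨y, hy, rfl⟩
  -- The line of slope `m` through `(y, f y)` reaches the height `b - 1` at `z`.
  set z := y + (b - 1 - f y) / m with hz
  have hyz : y < z := lt_add_of_pos_right y (div_pos_of_neg_of_neg (by linarith) hm_neg)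
  have hz_mem : z ∈ Set.Ici a := le_trans hy hyz.le
  have hslope : (f z - f y) / (z - y) ≤ m := hf.slope_anti_adjacent hx hz_mem hxy hyz
  have hfz : f z ≤ b - 1 := by
    have hmz : m * (z - y) = b - 1 - f y := by
      rw [hz, add_sub_cancel_left, mul_div_cancel₀ _ hm_neg.ne]
    rw [div_le_iff₀ (sub_pos.2 hyz), hmz] at hslope
    linarith
  linarith [hb ⟨z, hz_mem, rfl⟩]

theorem concaveOn_map_smul_le {𝕜 E : Type*} [Field 𝕜] [LinearOrder 𝕜] [IsStrictOrderedRing 𝕜]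
    [AddCommGroup E] [Module 𝕜 E] {s : Set E} {f : E → 𝕜} (hf : ConcaveOn 𝕜 s f)
    (h0_mem : 0 ∈ s) (h0 : 0 ≤ f 0) {a : 𝕜} (ha : 1 ≤ a) {x : E} (hx : a • x ∈ s) :
    f (a • x) ≤ a * f x := by
  have ha_pos : 0 < a := zero_lt_one.trans_le ha
  have hinv : a⁻¹ ≤ 1 := inv_le_one_of_one_le₀ ha
  have hconc : a⁻¹ * f (a • x) + (1 - a⁻¹) * f 0 ≤ f x := by
    simpa [smul_smul, ha_pos.ne'] using
      hf.2 hx h0_mem (inv_nonneg.2 ha_pos.le) (sub_nonneg.2 hinv) (add_sub_cancel _ _)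
  rw [← inv_mul_le_iff₀ ha_pos]
  linarith [mul_nonneg (sub_nonneg.2 hinv) h0]

variable {α : Type*} {l : Filter α} {u v : α → ℝ} {a b : ℝ}

theorem isBigO_comp_of_concaveOn_of_nonneg {κ : ℝ → ℝ} (hκ : ConcaveOn ℝ (Set.Ici 0) κ)
    (hκ0 : ∀ t, 0 ≤ t → 0 ≤ κ t) (hu : 0 ≤ᶠ[l] u) (hv : 0 ≤ᶠ[l] v) (huv : u =O[l] v) :
    (fun t => κ (u t)) =O[l] fun t => κ (v t) := by
  have hmono : MonotoneOn κ (Set.Ici 0) :=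
    monotoneOn_Ici_of_concaveOn_of_bddBelow hκ ⟨0, Set.forall_mem_image.2 hκ0⟩
  obtain ⟨c, hle⟩ := huv.bound
  refine .of_bound (max 1 c) ?_
  filter_upwards [hu, hv, hle] with t hut hvt ht
  simp only [Pi.zero_apply] at hut hvt
  rw [Real.norm_of_nonneg hut, Real.norm_of_nonneg hvt] at ht
  rw [Real.norm_of_nonneg (hκ0 _ hut), Real.norm_of_nonneg (hκ0 _ hvt)]
  have hmul_mem : max 1 c * v t ∈ Set.Ici (0 : ℝ) := by
    rw [Set.mem_Ici]
    positivity
  calc κ (u t) ≤ κ (max 1 c * v t) :=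
        hmono hut hmul_mem (ht.trans (by gcongr; exact le_max_right 1 c))
    _ ≤ max 1 c * κ (v t) :=
        concaveOn_map_smul_le hκ Set.self_mem_Ici (hκ0 0 le_rfl) (le_max_left 1 c) hmul_mem

theorem isTheta_comp_of_concaveOn_of_nonneg {κ : ℝ → ℝ} (hκ : ConcaveOn ℝ (Set.Ici 0) κ)
    (hκ0 : ∀ t, 0 ≤ t → 0 ≤ κ t) (hu : 0 ≤ᶠ[l] u) (hv : 0 ≤ᶠ[l] v) (huv : u =Θ[l] v) :
    (fun t => κ (u t)) =Θ[l] fun t => κ (v t) :=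
  ⟨isBigO_comp_of_concaveOn_of_nonneg hκ hκ0 hu hv huv.1,
    isBigO_comp_of_concaveOn_of_nonneg hκ hκ0 hv hu huv.2⟩

theorem isBigO_of_le_mul_add_of_tendsto_right (hu : 0 ≤ᶠ[l] u) (hv : Tendsto v l atTop)
    (huv : ∀ᶠ t in l, u t ≤ a * v t + b) : u =O[l] v := by
  refine .of_bound (a + 1) ?_
  filter_upwards [hu, huv, hv.eventually_ge_atTop 0, hv.eventually_ge_atTop b] with t hut ht hvt hb
  rw [Real.norm_of_nonneg hut, Real.norm_of_nonneg hvt]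
  linarith

theorem isBigO_of_le_mul_add_of_tendsto_left (hu : Tendsto u l atTop) (hv : 0 ≤ᶠ[l] v)
    (huv : ∀ᶠ t in l, u t ≤ a * v t + b) : u =O[l] v := by
  refine .of_bound (2 * a) ?_
  filter_upwards [hv, huv, hu.eventually_ge_atTop 0, hu.eventually_ge_atTop (2 * b)]
    with t hvt ht hut hb
  rw [Real.norm_of_nonneg hut, Real.norm_of_nonneg hvt]
  linarith

theorem isBigO_atTop_iff_exists_le_mul [SemilatticeSup α] [Nonempty α]
    (hu : 0 ≤ u) (hv : 0 ≤ v) {p : ℝ → Prop} (hp : ∀ᶠ C in atTop, p C) :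
    u =O[atTop] v ↔ ∃ C, p C ∧ ∃ T, ∀ t, T ≤ t → u t ≤ C * v t := by
  have hnorm (C : ℝ) : (∀ᶠ t in atTop, ‖u t‖ ≤ C * ‖v t‖) ↔ ∃ T, ∀ t, T ≤ t → u t ≤ C * v t := by
    simp only [Real.norm_of_nonneg (hu _), Real.norm_of_nonneg (hv _), eventually_atTop]
  constructor
  · intro h
    obtain ⟨C, hC, hle⟩ := (hp.and (isBigO_iff_eventually.1 h)).exists
    exact ⟨C, hC, (hnorm C).1 hle⟩
  · rintro ⟨C, -, hle⟩
    exact .of_bound C ((hnorm C).2 hle)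

end ConcaveGrowth

namespace IsQGRay

open Asymptotics

variable {X : Type*} [MetricSpace X] {q Q : ℝ} {g : ℕ → X}

theorem dist_le_mul_add (hg : IsQGRay q Q g) (hq : 0 ≤ q) (x₀ : X) {t : ℕ} (ht : 1 ≤ t) :
    dist (g t) x₀ ≤ q * t + (Q + dist (g 1) x₀) := by
  have ht' : (1 : ℝ) ≤ t := mod_cast ht
  have hupper := (hg t ht 1 (le_refl 1)).2
  rw [Nat.cast_one, abs_of_nonneg (sub_nonneg.2 ht')] at hupper
  linarith [dist_triangle (g t) (g 1) x₀]

theorem le_mul_dist_add (hg : IsQGRay q Q g) (hq : 0 < q) (x₀ : X) {t : ℕ} (ht : 1 ≤ t) :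
    (t : ℝ) ≤ q * dist (g t) x₀ + (q * (dist (g 1) x₀ + Q) + 1) := by
  have ht' : (1 : ℝ) ≤ t := mod_cast ht
  have hlower := (hg t ht 1 (le_refl 1)).1
  rw [Nat.cast_one, abs_of_nonneg (sub_nonneg.2 ht')] at hlower
  have hdiv : ((t : ℝ) - 1) / q ≤ dist (g t) x₀ + dist (g 1) x₀ + Q := by
    linarith [dist_triangle_right (g t) (g 1) x₀]
  rw [div_le_iff₀ hq] at hdiv
  linarith

theorem isTheta_dist (hg : IsQGRay q Q g) (hq : 0 < q) (x₀ : X) :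
    (fun t => dist (g t) x₀) =Θ[atTop] fun t : ℕ => (t : ℝ) := by
  have hdist : 0 ≤ᶠ[atTop] fun t => dist (g t) x₀ := .of_forall fun _ => dist_nonneg
  exact ⟨isBigO_of_le_mul_add_of_tendsto_right hdist tendsto_natCast_atTop_atTop
      ((eventually_ge_atTop 1).mono fun _ ht => hg.dist_le_mul_add hq.le x₀ ht),
    isBigO_of_le_mul_add_of_tendsto_left tendsto_natCast_atTop_atTop hdist
      ((eventually_ge_atTop 1).mono fun _ ht => hg.le_mul_dist_add hq x₀ ht)⟩

end IsQGRay

open Asymptotics in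
theorem stmt_16_general {X : Type*} [MetricSpace X] (x₀ : X) {q Q : ℝ} (hq : 0 < q) {g : ℕ → X}
    (hg : IsQGRay q Q g) (h : ℕ → X) {κ : ℝ → ℝ} (hκ0 : ∀ t, 0 ≤ t → 0 ≤ κ t)
    (hκconc : ConcaveOn ℝ (Set.Ici 0) κ) :
    (∃ C : ℝ, 1 ≤ C ∧ ∃ T : ℕ, ∀ t : ℕ, T ≤ t →
        dist (g t) (h t) ≤ C * κ (dist (g t) x₀)) ↔
    (∃ M : ℝ, 0 < M ∧ ∃ T : ℕ, ∀ t : ℕ, T ≤ t →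
        dist (g t) (h t) ≤ M * κ (t : ℝ)) := by
  have htheta : (fun t => κ (dist (g t) x₀)) =Θ[atTop] fun t : ℕ => κ t :=
    isTheta_comp_of_concaveOn_of_nonneg hκconc hκ0 (.of_forall fun _ => dist_nonneg)
      (.of_forall fun t => t.cast_nonneg) (hg.isTheta_dist hq x₀)
  have hdist : 0 ≤ fun t => dist (g t) (h t) := fun _ => dist_nonneg
  rw [← isBigO_atTop_iff_exists_le_mul hdist (fun _ => hκ0 _ dist_nonneg) (eventually_ge_atTop 1),
    ← isBigO_atTop_iff_exists_le_mul hdist (fun t => hκ0 _ t.cast_nonneg) (eventually_gt_atTop 0)]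
  exact htheta.isBigO_congr_right

/-- Lemma 6.6: for a sublinear concave increasing κ, tracking measured via κ(‖g(t)‖) and
via κ(t) are equivalent. -/
theorem stmt_16 {X : Type*} [MetricSpace X] (x₀ : X) (g h : ℕ → X)
    (hg : ∃ q Q : ℝ, 1 ≤ q ∧ 0 ≤ Q ∧ IsQGRay q Q g)
    (hh : ∃ q Q : ℝ, 1 ≤ q ∧ 0 ≤ Q ∧ IsQGRay q Q h)
    (κ : ℝ → ℝ) (hκ1 : ∀ t, 0 ≤ t → 1 ≤ κ t)
    (hκsub : Tendsto (fun t => κ t / t) atTop (nhds 0))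
    (hκconc : ConcaveOn ℝ (Set.Ici 0) κ)
    (hκmono : MonotoneOn κ (Set.Ici 0)) :
    (∃ C : ℝ, 1 ≤ C ∧ ∃ T : ℕ, ∀ t : ℕ, T ≤ t →
        dist (g t) (h t) ≤ C * κ (dist (g t) x₀)) ↔
    (∃ M : ℝ, 0 < M ∧ ∃ T : ℕ, ∀ t : ℕ, T ≤ t →
        dist (g t) (h t) ≤ M * κ (t : ℝ)) := by
  obtain ⟨q, Q, hq, -, hg⟩ := hg
  exact stmt_16_general x₀ (zero_lt_one.trans_le hq) hg h
    (fun t ht => zero_le_one.trans (hκ1 t ht)) hκconc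
end

section
/- Let X be a proper geodesic δ-hyperbolic metric space, x₀ ∈ X, and κ a sublinear function. If g, h : [0,∞) → X are geodesic rays (isometric embeddings) with g(0) = h(0) = x₀ which κ-track each other, i.e., there is a constant C ≥ 1 such that d(g(t),h(t)) ≤ C·κ(C·d(x₀,g(t))) for all sufficiently large t, then g and h are within bounded distance of each other: sup_{t ≥ 0} d(g(t),h(t)) < ∞. -/
open Filter Metric

/-!
Measured from the common origin, points at time `s` on two geodesic rays have Gromov product
`s - d(g s, h s) / 2`. If the rays diverge at a linear rate less than `2` along some times
tending to infinity, this product is unbounded. Since points of a single ray at times `t ≤ s` have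
Gromov product `t`, hyperbolicity along the chain `g t, g s, h s, h t` with `s` large gives that
`g t` and `h t` have Gromov product at least `t - δ / 2`, that is, distance at most `δ`. Sublinear
tracking makes the divergence rate zero.
-/

open Asymptotics

section Hyperbolic

variable {X : Type*} [MetricSpace X] {δ r : ℝ} {a x y z w : X}

theorem gromovProd_self (a x : X) : gromovProd a x x = dist x a := by
  simp [gromovProd]

theorem gromovProd_comm (a x y : X) : gromovProd a x y = gromovProd a y x := by
  simp only [gromovProd, dist_comm x y, add_comm (dist x a)]

/-- Gromov's hyperbolicity inequality for the single base point `a`, with the normalization `δ / 4`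
of the error term. A space is `δ`-hyperbolic when this holds at each of its points. -/
def IsHyperbolicAt (δ : ℝ) (a : X) : Prop :=
  ∀ x y z : X, min (gromovProd a x z) (gromovProd a z y) - δ / 4 ≤ gromovProd a x y

theorem IsHyperbolicAt.nonneg (hyp : IsHyperbolicAt δ a) : 0 ≤ δ := by
  have := hyp a a a
  rw [gromovProd_self, dist_self, min_self] at this
  linarith

theorem IsHyperbolicAt.sub_le_gromovProd (hyp : IsHyperbolicAt δ a)
    (hxy : r ≤ gromovProd a x y) (hyz : r ≤ gromovProd a y z) :
    r - δ / 4 ≤ gromovProd a x z :=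
  (sub_le_sub_right (le_min hxy hyz) _).trans (hyp x z y)

theorem IsHyperbolicAt.sub_half_le_gromovProd (hyp : IsHyperbolicAt δ a)
    (hxy : r ≤ gromovProd a x y) (hyz : r ≤ gromovProd a y z) (hzw : r ≤ gromovProd a z w) :
    r - δ / 2 ≤ gromovProd a x w := by
  have hxz : r - δ / 4 ≤ gromovProd a x z := hyp.sub_le_gromovProd hxy hyz
  have hzw' : r - δ / 4 ≤ gromovProd a z w := by linarith [hyp.nonneg]
  linarith [hyp.sub_le_gromovProd hxz hzw']

end Hyperbolic

/-- A geodesic ray issuing from `x₀`: an isometric embedding of `[0, ∞)`, encoded as a function on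
`ℝ` whose values at negative times are irrelevant. -/
structure IsGeodesicRay {X : Type*} [MetricSpace X] (x₀ : X) (g : ℝ → X) : Prop where
  map_zero : g 0 = x₀
  dist_eq : ∀ s t : ℝ, 0 ≤ s → 0 ≤ t → dist (g s) (g t) = |s - t|

namespace IsGeodesicRay

variable {X : Type*} [MetricSpace X] {x₀ : X} {g h : ℝ → X} {s t : ℝ}

theorem dist_origin (hg : IsGeodesicRay x₀ g) (ht : 0 ≤ t) : dist (g t) x₀ = t := by
  rw [← hg.map_zero, hg.dist_eq t 0 ht le_rfl, sub_zero, abs_of_nonneg ht]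

theorem gromovProd_of_le (hg : IsGeodesicRay x₀ g) (ht : 0 ≤ t) (hts : t ≤ s) :
    gromovProd x₀ (g t) (g s) = t := by
  have hs : 0 ≤ s := ht.trans hts
  rw [gromovProd, hg.dist_origin ht, hg.dist_origin hs, hg.dist_eq t s ht hs, abs_sub_comm,
    abs_of_nonneg (sub_nonneg.2 hts)]
  ring

theorem gromovProd_eq_sub_dist (hg : IsGeodesicRay x₀ g) (hh : IsGeodesicRay x₀ h) (ht : 0 ≤ t) :
    gromovProd x₀ (g t) (h t) = t - dist (g t) (h t) / 2 := by
  rw [gromovProd, hg.dist_origin ht, hh.dist_origin ht]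
  ring

theorem dist_le_of_le_gromovProd {δ : ℝ} (hyp : IsHyperbolicAt δ x₀) (hg : IsGeodesicRay x₀ g)
    (hh : IsGeodesicRay x₀ h) (ht : 0 ≤ t) (hts : t ≤ s)
    (hs : t ≤ gromovProd x₀ (g s) (h s)) : dist (g t) (h t) ≤ δ := by
  have hgg : t ≤ gromovProd x₀ (g t) (g s) := (hg.gromovProd_of_le ht hts).ge
  have hhh : t ≤ gromovProd x₀ (h s) (h t) := by
    rw [gromovProd_comm, hh.gromovProd_of_le ht hts]
  have hgh : t - δ / 2 ≤ gromovProd x₀ (g t) (h t) := hyp.sub_half_le_gromovProd hgg hs hhh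
  rw [hg.gromovProd_eq_sub_dist hh ht] at hgh
  linarith

end IsGeodesicRay

theorem isLittleO_mul_comp_mul_of_tendsto_div {κ : ℝ → ℝ}
    (hκ : Tendsto (fun t => κ t / t) atTop (nhds 0)) {C : ℝ} (hC : 0 < C) :
    (fun t => C * κ (C * t)) =o[atTop] fun t => t := by
  have hκ_id : κ =o[atTop] fun t => t :=
    isLittleO_of_tendsto' ((eventually_ne_atTop 0).mono fun t ht h0 => absurd h0 ht) hκ
  have hscale : Tendsto (fun t : ℝ => C * t) atTop atTop := tendsto_id.const_mul_atTop hC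
  exact ((hκ_id.comp_tendsto hscale).const_mul_left C).trans_isBigO
    (isBigO_const_mul_self C (fun t => t) atTop)

theorem IsGeodesicRay.eventually_dist_le_mul_of_tracks {X : Type*} [MetricSpace X] {x₀ : X}
    {g : ℝ → X} (hg : IsGeodesicRay x₀ g) (h : ℝ → X) {κ : ℝ → ℝ}
    (hκ : Tendsto (fun t => κ t / t) atTop (nhds 0)) {C : ℝ} (hC : 0 < C)
    (htrack : ∀ᶠ t in atTop, dist (g t) (h t) ≤ C * κ (C * dist x₀ (g t))) {c : ℝ} (hc : 0 < c) :
    ∀ᶠ t in atTop, dist (g t) (h t) ≤ c * t := by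
  filter_upwards [htrack, (isLittleO_mul_comp_mul_of_tendsto_div hκ hC).bound hc,
    eventually_ge_atTop 0] with t htr hbound ht
  calc dist (g t) (h t) ≤ C * κ (C * t) := by rwa [dist_comm x₀, hg.dist_origin ht] at htr
    _ ≤ ‖C * κ (C * t)‖ := Real.le_norm_self _
    _ ≤ c * t := by rwa [Real.norm_of_nonneg ht] at hbound

theorem stmt_18_general {X : Type*} [MetricSpace X] {δ : ℝ} {x₀ : X} (hyp : IsHyperbolicAt δ x₀)
    {g h : ℝ → X} (hg : IsGeodesicRay x₀ g) (hh : IsGeodesicRay x₀ h) {c : ℝ} (hc : c < 2)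
    (hdiv : ∃ᶠ s in atTop, dist (g s) (h s) ≤ c * s) {t : ℝ} (ht : 0 ≤ t) :
    dist (g t) (h t) ≤ δ := by
  obtain ⟨s, hdist, hts, hs_large⟩ := (hdiv.and_eventually
    ((eventually_ge_atTop t).and (eventually_ge_atTop (2 * t / (2 - c))))).exists
  have hlinear : 2 * t ≤ s * (2 - c) := (div_le_iff₀ (sub_pos.2 hc)).1 hs_large
  refine IsGeodesicRay.dist_le_of_le_gromovProd hyp hg hh ht hts ?_
  rw [hg.gromovProd_eq_sub_dist hh (ht.trans hts)]
  linarith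

/-- Proposition 6.8 (key step): in a proper geodesic δ-hyperbolic space, geodesic rays
that κ-track each other for a sublinear κ are within bounded distance. -/
theorem stmt_18 {X : Type*} [MetricSpace X] [ProperSpace X]
    (hgeo : IsGeodesicSpace X) (δ : ℝ)
    (hhyp : ∀ x y z a : X,
      gromovProd a x y ≥ min (gromovProd a x z) (gromovProd a z y) - δ / 4)
    (x₀ : X) (κ : ℝ → ℝ) (hκ1 : ∀ t, 0 ≤ t → 1 ≤ κ t)
    (hκsub : Tendsto (fun t => κ t / t) atTop (nhds 0))
    (g h : ℝ → X) (hg0 : g 0 = x₀) (hh0 : h 0 = x₀)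
    (hgiso : ∀ s t : ℝ, 0 ≤ s → 0 ≤ t → dist (g s) (g t) = |s - t|)
    (hhiso : ∀ s t : ℝ, 0 ≤ s → 0 ≤ t → dist (h s) (h t) = |s - t|)
    (htrack : ∃ C : ℝ, 1 ≤ C ∧ ∃ T : ℝ, ∀ t : ℝ, T ≤ t →
      dist (g t) (h t) ≤ C * κ (C * dist x₀ (g t))) :
    ∃ B : ℝ, ∀ t : ℝ, 0 ≤ t → dist (g t) (h t) ≤ B := by
  obtain ⟨C, hC, htr⟩ := htrack
  have hg : IsGeodesicRay x₀ g := ⟨hg0, hgiso⟩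
  have hdiv : ∀ᶠ t in atTop, dist (g t) (h t) ≤ 1 * t :=
    hg.eventually_dist_le_mul_of_tracks h hκsub (zero_lt_one.trans_le hC)
      (eventually_atTop.2 htr) one_pos
  exact ⟨δ, fun t ht => stmt_18_general (fun x y z => hhyp x y z x₀) hg ⟨hh0, hhiso⟩
    one_lt_two hdiv.frequently ht⟩
end
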